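/- (Toeplitz-corona theorem on the disk) Let φ₁,…,φ_N be bounded analytic functions on 𝔻 and let δ > 0. The following are equivalent: (i) the function (ζ,λ) ↦ [∑_{i=1}^N φ_i(ζ) \overline{φ_i(λ)} − δ] / (1 − ζ λ̄) is positive semi-definite on 𝔻 × 𝔻; (ii) there exist bounded analytic functions ψ₁,…,ψ_N on 𝔻 such that ∑_{i=1}^N ψ_i(λ) φ_i(λ) = 1 for all λ ∈ 𝔻 and sup_{λ∈𝔻} ∑_{i=1}^N |ψ_i(λ)|² ≤ 1/δ. -/

import Mathlib

open Finset Metric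
open scoped ComplexOrder

/-- A kernel on the unit disk is positive semi-definite if all its finite Gram sums over
points of `𝔻` are nonnegative. -/
def IsPSDKernelDisk (F : ℂ → ℂ → ℂ) : Prop :=
  ∀ (n : ℕ) (mu : Fin n → ℂ), (∀ i, mu i ∈ ball (0 : ℂ) 1) → ∀ a : Fin n → ℂ,
    0 ≤ ∑ i, ∑ j, a i * starRingEnd ℂ (a j) * F (mu i) (mu j)

/-!
If `ψ` solves the Bezout equation, multiplication by the column `ψ` maps the Hardy space `H²` to
`H² ⊗ ℂᴺ` with norm at most `1/√δ`. Its adjoint carries the tuple of Szegő combinations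
`(∑ conj (a x φ_i(μ x)) k_{μ x})_i` to `∑ conj (a x) k_{μ x}`, because `∑ ψ_i φ_i = 1`. Comparing
norms gives `δ ‖∑ conj (a x) k_{μ x}‖² ≤ ∑_i ‖∑ conj (a x φ_i(μ x)) k_{μ x}‖²`, which is the
positivity of the Gram sum.

Conversely, factor the positive kernel as `⟨g z, g w⟩` with `g` valued in a Hilbert space. Clearing
the denominator turns this into an equality of Gram matrices between the vectors `(φ(z), z g(z))`
and `(√δ, g(z))`, so a contraction sends the former to the latter. Its transfer function `W` is
holomorphic and contractive on the disk and satisfies `W(z) φ(z) = √δ`, hence `ψ = W/√δ` works.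
-/

open scoped ComplexConjugate InnerProductSpace Topology
open Real (circleAverage)

section TransferFunction

variable {𝕜 F G E : Type*} [NontriviallyNormedField 𝕜]
  [NormedAddCommGroup F] [NormedSpace 𝕜 F] [NormedAddCommGroup G] [NormedSpace 𝕜 G]
  [NormedAddCommGroup E] [NormedSpace 𝕜 E]

/-- The transfer function `z ↦ A + zB(1 - zD)⁻¹C` of the linear system with block operator
`(x, y) ↦ (Ax + By, Cx + Dy)`. Since `Ring.inverse` is `0` at non-units, the value is meaningful
only where `1 - zD` is invertible. -/
noncomputable def transferFunction (A : F →L[𝕜] G) (B : E →L[𝕜] G) (C : F →L[𝕜] E)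
    (D : E →L[𝕜] E) (z : 𝕜) : F →L[𝕜] G :=
  A + z • B ∘L Ring.inverse (1 - z • D) ∘L C

variable {A : F →L[𝕜] G} {B : E →L[𝕜] G} {C : F →L[𝕜] E} {D : E →L[𝕜] E}

lemma norm_lowerRightBlock_le_one
    (hcontr : ∀ x y, ‖A x + B y‖ ^ 2 + ‖C x + D y‖ ^ 2 ≤ ‖x‖ ^ 2 + ‖y‖ ^ 2) : ‖D‖ ≤ 1 := by
  refine D.opNorm_le_bound zero_le_one fun y ↦ ?_
  have h : ‖B y‖ ^ 2 + ‖D y‖ ^ 2 ≤ ‖y‖ ^ 2 := by simpa using hcontr 0 y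
  rw [one_mul]
  exact (sq_le_sq₀ (norm_nonneg _) (norm_nonneg _)).1 (by linarith [sq_nonneg ‖B y‖])

variable [CompleteSpace E]

lemma isUnit_one_sub_smul_of_norm_lt_one (hD : ‖D‖ ≤ 1) {z : 𝕜} (hz : ‖z‖ < 1) :
    IsUnit (1 - z • D) := by
  apply isUnit_one_sub_of_norm_lt_one
  calc ‖z • D‖ = ‖z‖ * ‖D‖ := norm_smul z D
    _ ≤ ‖z‖ := mul_le_of_le_one_right (norm_nonneg z) hD
    _ < 1 := hz

lemma inverse_one_sub_smul_apply_eq_iff (hD : ‖D‖ ≤ 1) {z : 𝕜} (hz : ‖z‖ < 1) {x y : E} :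
    Ring.inverse (1 - z • D) x = y ↔ x + D (z • y) = y := by
  have hunit := isUnit_one_sub_smul_of_norm_lt_one hD hz
  have hright : (1 - z • D) (Ring.inverse (1 - z • D) x) = x :=
    DFunLike.congr_fun (Ring.mul_inverse_cancel _ hunit) x
  have hleft : Ring.inverse (1 - z • D) ((1 - z • D) y) = y :=
    DFunLike.congr_fun (Ring.inverse_mul_cancel _ hunit) y
  have hsolve : (1 - z • D) y = x ↔ x + D (z • y) = y := by
    rw [eq_comm (b := y)]
    simp [sub_eq_iff_eq_add]
  rw [← hsolve]
  exact ⟨fun h ↦ h ▸ hright, fun h ↦ h ▸ hleft⟩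

lemma transferFunction_apply_of_state_eq (hD : ‖D‖ ≤ 1) {z : 𝕜} (hz : ‖z‖ < 1) {x : F} {y : E}
    (hy : C x + D (z • y) = y) : transferFunction A B C D z x = A x + B (z • y) := by
  have hstate := (inverse_one_sub_smul_apply_eq_iff hD hz).2 hy
  simp [transferFunction, hstate]

lemma differentiableOn_transferFunction (hD : ‖D‖ ≤ 1) :
    DifferentiableOn 𝕜 (transferFunction A B C D) (ball 0 1) := by
  intro z hz
  have hunit := isUnit_one_sub_smul_of_norm_lt_one hD (mem_ball_zero_iff.1 hz)
  have hinverse : DifferentiableAt 𝕜 (fun z : 𝕜 ↦ Ring.inverse (1 - z • D)) z :=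
    (differentiableAt_inverse hunit).comp z (f := fun z : 𝕜 ↦ 1 - z • D) (by fun_prop)
  have hcomp := (differentiableAt_const B).clm_comp (hinverse.clm_comp (differentiableAt_const C))
  exact ((differentiableAt_id.smul hcomp).const_add A).differentiableWithinAt

/-- The energy balance of the system: the state `y` solving `Cx + zDy = y` is fed back into a
contraction with a factor `|z| < 1`, so the output cannot exceed the input. -/
theorem norm_transferFunction_le_one
    (hcontr : ∀ x y, ‖A x + B y‖ ^ 2 + ‖C x + D y‖ ^ 2 ≤ ‖x‖ ^ 2 + ‖y‖ ^ 2)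
    {z : 𝕜} (hz : ‖z‖ < 1) : ‖transferFunction A B C D z‖ ≤ 1 := by
  have hD := norm_lowerRightBlock_le_one hcontr
  refine ContinuousLinearMap.opNorm_le_bound _ zero_le_one fun x ↦ ?_
  obtain ⟨y, hy⟩ : ∃ y, C x + D (z • y) = y := ⟨_, (inverse_one_sub_smul_apply_eq_iff hD hz).1 rfl⟩
  have hbalance := hcontr x (z • y)
  have hfeedback : ‖z • y‖ ≤ ‖y‖ := by
    rw [norm_smul]; exact mul_le_of_le_one_left (norm_nonneg y) hz.le
  rw [hy, ← transferFunction_apply_of_state_eq hD hz hy] at hbalance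
  rw [one_mul]
  refine (sq_le_sq₀ (norm_nonneg _) (norm_nonneg _)).1 ?_
  nlinarith [norm_nonneg (z • y)]

end TransferFunction

lemma exists_block_decomposition {𝕜 F G E : Type*} [NontriviallyNormedField 𝕜]
    [SeminormedAddCommGroup F] [NormedSpace 𝕜 F] [SeminormedAddCommGroup G] [NormedSpace 𝕜 G]
    [SeminormedAddCommGroup E] [NormedSpace 𝕜 E]
    (T : WithLp 2 (F × E) →L[𝕜] WithLp 2 (G × E)) :
    ∃ (A : F →L[𝕜] G) (B : E →L[𝕜] G) (C : F →L[𝕜] E) (D : E →L[𝕜] E),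
      ∀ x y, T (WithLp.toLp 2 (x, y)) = WithLp.toLp 2 (A x + B y, C x + D y) := by
  let e := (WithLp.prodContinuousLinearEquiv 2 𝕜 F E).symm.toContinuousLinearMap
  let inF := e ∘L ContinuousLinearMap.inl 𝕜 F E
  let inE := e ∘L ContinuousLinearMap.inr 𝕜 F E
  refine ⟨WithLp.fstL 2 𝕜 G E ∘L T ∘L inF, WithLp.fstL 2 𝕜 G E ∘L T ∘L inE,
    WithLp.sndL 2 𝕜 G E ∘L T ∘L inF, WithLp.sndL 2 𝕜 G E ∘L T ∘L inE, fun x y ↦ ?_⟩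
  have hsplit : WithLp.toLp 2 (x, y) = inF x + inE y := by
    simp [inF, inE, e, ← WithLp.toLp_add]
  rw [hsplit, map_add]
  rfl

lemma norm_linearCombination_eq_of_inner_eq {𝕜 X H₁ H₂ : Type*} [RCLike 𝕜]
    [SeminormedAddCommGroup H₁] [InnerProductSpace 𝕜 H₁]
    [SeminormedAddCommGroup H₂] [InnerProductSpace 𝕜 H₂] {u : X → H₁} {v : X → H₂}
    (huv : ∀ x y, ⟪u x, u y⟫_𝕜 = ⟪v x, v y⟫_𝕜) (c : X →₀ 𝕜) :
    ‖Finsupp.linearCombination 𝕜 u c‖ = ‖Finsupp.linearCombination 𝕜 v c‖ := by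
  have hinner : ⟪Finsupp.linearCombination 𝕜 u c, Finsupp.linearCombination 𝕜 u c⟫_𝕜 =
      ⟪Finsupp.linearCombination 𝕜 v c, Finsupp.linearCombination 𝕜 v c⟫_𝕜 := by
    simp only [Finsupp.linearCombination_apply, Finsupp.sum_inner, Finsupp.inner_sum,
      inner_smul_left, inner_smul_right, huv]
  rw [norm_eq_sqrt_re_inner (𝕜 := 𝕜), norm_eq_sqrt_re_inner (𝕜 := 𝕜), hinner]

/-- The lurking isometry argument: `u x ↦ v x` is isometric on the span of the `u x`. -/
theorem exists_norm_le_one_apply_eq_of_inner_eq {𝕜 X H₁ H₂ : Type*} [RCLike 𝕜]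
    [NormedAddCommGroup H₁] [InnerProductSpace 𝕜 H₁] [CompleteSpace H₁]
    [NormedAddCommGroup H₂] [InnerProductSpace 𝕜 H₂] [CompleteSpace H₂] {u : X → H₁} {v : X → H₂}
    (huv : ∀ x y, ⟪u x, u y⟫_𝕜 = ⟪v x, v y⟫_𝕜) :
    ∃ T : H₁ →L[𝕜] H₂, ‖T‖ ≤ 1 ∧ ∀ x, T (u x) = v x := by
  let U := Finsupp.linearCombination 𝕜 u
  let V := Finsupp.linearCombination 𝕜 v
  let S := (LinearMap.range U).topologicalClosure
  have : CompleteSpace S := (LinearMap.range U).isClosed_topologicalClosure.completeSpace_coe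
  let e : (X →₀ 𝕜) →ₗ[𝕜] S :=
    U.codRestrict S fun c ↦ (LinearMap.range U).le_topologicalClosure ⟨c, rfl⟩
  have hdense : DenseRange e := by
    intro y
    have himage : Subtype.val '' Set.range e = (LinearMap.range U : Set H₁) := by
      rw [← Set.range_comp]; rfl
    rw [closure_subtype, himage]
    exact y.2
  have hbound : ∀ c, ‖V c‖ ≤ 1 * ‖e c‖ := fun c ↦ by
    rw [one_mul]; exact (norm_linearCombination_eq_of_inner_eq huv c).ge
  refine ⟨V.extendOfNorm e ∘L S.orthogonalProjectionOnto, ?_, fun x ↦ ?_⟩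
  · refine ContinuousLinearMap.opNorm_le_bound _ zero_le_one fun x ↦ ?_
    calc ‖V.extendOfNorm e (S.orthogonalProjectionOnto x)‖
        ≤ 1 * ‖S.orthogonalProjectionOnto x‖ :=
          LinearMap.norm_extendOfNorm_apply_le hdense 1 hbound _
      _ ≤ 1 * ‖x‖ := by gcongr; exact S.norm_orthogonalProjectionOnto_apply_le x
  · have hux : u x = (e (Finsupp.single x 1) : H₁) := by simp [e, U]
    rw [hux, ContinuousLinearMap.comp_apply,
      Submodule.orthogonalProjectionOnto_mem_subspace_eq_self,
      LinearMap.extendOfNorm_eq hdense ⟨1, hbound⟩]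
    simp [V]

section TangentialInterpolation

universe u v

variable {𝕜 : Type v} [RCLike 𝕜]

lemma one_sub_mul_conj_ne_zero {z w : 𝕜} (hz : ‖z‖ ≤ 1) (hw : ‖w‖ < 1) : 1 - z * conj w ≠ 0 := by
  intro h
  have hnorm : ‖z‖ * ‖w‖ = 1 := by
    rw [← RCLike.norm_conj w, ← norm_mul, ← sub_eq_zero.1 h, norm_one]
  nlinarith [norm_nonneg w]

/-- Moore's theorem: the vectors are the kernel functions of the reproducing kernel Hilbert space
of `K`. -/
theorem exists_inner_eq_of_posSemidef {X : Type u} {K : Matrix X X 𝕜} (hK : K.PosSemidef) :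
    ∃ (E : Type (max u v)) (_ : NormedAddCommGroup E) (_ : InnerProductSpace 𝕜 E)
      (_ : CompleteSpace E) (g : X → E), ∀ x y, ⟪g x, g y⟫_𝕜 = K x y := by
  let L : Matrix X X (𝕜 →L[𝕜] 𝕜) := .of fun x y ↦ K x y • (1 : 𝕜 →L[𝕜] 𝕜)
  have hsymm : ∀ x y, conj (K x y) = K y x := fun x y ↦ hK.isHermitian.apply y x
  have hL : L.PosSemidef := by
    have htfae := (RKHS.posSemidef_tfae (K := L)).out 0 2
    refine htfae.2 ⟨?_, fun c ↦ ?_⟩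
    · ext x y
      simp [L, hsymm]
    · have hsum : (c.sum fun x a ↦ c.sum fun y b ↦ ⟪L y x a, b⟫_𝕜) =
          c.sum fun x a ↦ c.sum fun y b ↦ star a * K x y * b := by
        simp [L, hsymm, mul_comm]
      rw [hsum]
      exact (RCLike.nonneg_iff.1 (hK.2 c)).1
  have : Fact L.PosSemidef := ⟨hL⟩
  refine ⟨RKHS.OfKernel L, inferInstance, inferInstance, inferInstance,
    fun x ↦ RKHS.kerFun (RKHS.OfKernel L) x 1, fun x y ↦ ?_⟩
  rw [← RKHS.kernel_inner, RKHS.OfKernel.kernel_ofKernel]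
  simp [L, hsymm]

variable {X : Type u} {H₁ H₂ : Type*}
  [NormedAddCommGroup H₁] [InnerProductSpace 𝕜 H₁] [CompleteSpace H₁]
  [NormedAddCommGroup H₂] [InnerProductSpace 𝕜 H₂] [CompleteSpace H₂]

/-- The sufficiency half of tangential Nevanlinna–Pick interpolation, for arbitrarily many nodes
`z x`. -/
theorem exists_contractive_interpolant_of_posSemidef {z : X → 𝕜} (hz : ∀ x, ‖z x‖ < 1)
    {v : X → H₁} {w : X → H₂}
    (hpick : Matrix.PosSemidef
      (.of fun x y ↦ (⟪v x, v y⟫_𝕜 - ⟪w x, w y⟫_𝕜) / (1 - z y * conj (z x)))) :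
    ∃ W : 𝕜 → H₁ →L[𝕜] H₂, DifferentiableOn 𝕜 W (ball 0 1) ∧
      (∀ ζ, ‖ζ‖ < 1 → ‖W ζ‖ ≤ 1) ∧ ∀ x, W (z x) (v x) = w x := by
  obtain ⟨E, _, _, _, g, hg⟩ := exists_inner_eq_of_posSemidef hpick
  obtain ⟨T, hTnorm, hT⟩ := exists_norm_le_one_apply_eq_of_inner_eq (𝕜 := 𝕜)
    (u := fun x ↦ WithLp.toLp 2 (v x, z x • g x)) (v := fun x ↦ WithLp.toLp 2 (w x, g x)) (by
      intro x y
      have hgram : (1 - z y * conj (z x)) * ⟪g x, g y⟫_𝕜 = ⟪v x, v y⟫_𝕜 - ⟪w x, w y⟫_𝕜 := by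
        rw [hg, Matrix.of_apply, mul_div_cancel₀ _ (one_sub_mul_conj_ne_zero (hz y).le (hz x))]
      simp only [WithLp.prod_inner_apply, inner_smul_left, inner_smul_right]
      linear_combination -hgram)
  obtain ⟨A, B, C, D, hblock⟩ := exists_block_decomposition T
  have hcontr : ∀ x y, ‖A x + B y‖ ^ 2 + ‖C x + D y‖ ^ 2 ≤ ‖x‖ ^ 2 + ‖y‖ ^ 2 := by
    intro x y
    have hsq := pow_le_pow_left₀ (norm_nonneg _) (T.le_of_opNorm_le hTnorm (WithLp.toLp 2 (x, y))) 2
    simpa [hblock, WithLp.prod_norm_sq_eq_of_L2] using hsq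
  have hD := norm_lowerRightBlock_le_one hcontr
  refine ⟨transferFunction A B C D, differentiableOn_transferFunction hD,
    fun ζ hζ ↦ norm_transferFunction_le_one hcontr hζ, fun x ↦ ?_⟩
  have hTx : WithLp.toLp 2 (A (v x) + B (z x • g x), C (v x) + D (z x • g x)) =
      WithLp.toLp 2 (w x, g x) := (hblock _ _).symm.trans (hT x)
  rw [transferFunction_apply_of_state_eq hD (hz x) (congrArg WithLp.snd hTx)]
  exact congrArg WithLp.fst hTx

end TangentialInterpolation

lemma sum_norm_sq_apply_orthonormalBasis {ι 𝕜 E : Type*} [Fintype ι] [RCLike 𝕜]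
    [NormedAddCommGroup E] [InnerProductSpace 𝕜 E] [CompleteSpace E]
    (b : OrthonormalBasis ι 𝕜 E) (L : StrongDual 𝕜 E) : ∑ i, ‖L (b i)‖ ^ 2 = ‖L‖ ^ 2 := by
  obtain ⟨x, rfl⟩ := (InnerProductSpace.toDual 𝕜 E).surjective L
  simpa using b.sum_sq_norm_inner_left x

section HardySpace

/-- The Szegő kernel of the unit disk, the reproducing kernel of the Hardy space `H²` normed by
circle averages. -/
noncomputable def szegoKernel (z w : ℂ) : ℂ :=
  (1 - z * conj w)⁻¹

lemma conj_szegoKernel (z w : ℂ) : conj (szegoKernel z w) = szegoKernel w z := by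
  simp [szegoKernel, mul_comm]

lemma differentiableOn_szegoKernel {w : ℂ} (hw : ‖w‖ < 1) :
    DifferentiableOn ℂ (szegoKernel · w) (closedBall 0 1) := by
  have hne : ∀ z ∈ closedBall (0 : ℂ) 1, 1 - z * conj w ≠ 0 := fun z hz ↦
    one_sub_mul_conj_ne_zero (mem_closedBall_zero_iff.1 hz) hw
  unfold szegoKernel
  fun_prop (disch := assumption)

lemma circleAverage_mul_conj_szegoKernel {u : ℂ → ℂ} (hu : DiffContOnCl ℂ u (ball 0 1)) {w : ℂ}
    (hw : ‖w‖ < 1) : circleAverage (fun z ↦ u z * conj (szegoKernel z w)) 0 1 = u w := by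
  have hkernel : Set.EqOn (fun z ↦ u z * conj (szegoKernel z w))
      (fun z ↦ ((z - 0) / (z - w)) • u z) (sphere 0 |1|) := by
    intro z hz
    have hz1 : ‖z‖ = 1 := by simpa using hz
    have hz0 : z ≠ 0 := norm_ne_zero_iff.1 (by simp [hz1])
    have hconj : conj z = z⁻¹ := (Complex.inv_eq_conj hz1).symm
    have hinv : 1 - w * z⁻¹ = (z - w) / z := by field_simp
    simp only [conj_szegoKernel]
    rw [szegoKernel, hconj, hinv, inv_div, sub_zero, smul_eq_mul, mul_comm]
  rw [Real.circleAverage_congr_sphere hkernel]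
  exact DiffContOnCl.circleAverage_smul_div (by simpa using hu) (by simpa using hw)

variable {X : Type*} [Fintype X] {μ : X → ℂ}

/-- The Riesz representer in the Hardy space `H²` of the functional `u ↦ ∑ x, a x * u (μ x)`. -/
noncomputable def evalRepresenter (μ a : X → ℂ) (z : ℂ) : ℂ :=
  ∑ x, conj (a x) * szegoKernel z (μ x)

lemma differentiableOn_evalRepresenter (hμ : ∀ x, ‖μ x‖ < 1) (a : X → ℂ) :
    DifferentiableOn ℂ (evalRepresenter μ a) (closedBall 0 1) :=
  DifferentiableOn.fun_sum fun x _ ↦ (differentiableOn_szegoKernel (hμ x)).const_mul _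

lemma diffContOnCl_evalRepresenter (hμ : ∀ x, ‖μ x‖ < 1) (a : X → ℂ) :
    DiffContOnCl ℂ (evalRepresenter μ a) (ball 0 1) :=
  (differentiableOn_evalRepresenter hμ a).diffContOnCl_ball subset_rfl

lemma circleIntegrable_mul_conj {u v : ℂ → ℂ} {c : ℂ} {r : ℝ} (hr : 0 ≤ r)
    (hu : DiffContOnCl ℂ u (ball c r)) (hv : DiffContOnCl ℂ v (ball c r)) :
    CircleIntegrable (fun z ↦ u z * conj (v z)) c r := by
  have hcont := hu.continuousOn_ball.mul (Complex.continuous_conj.comp_continuousOn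
    hv.continuousOn_ball)
  exact (hcont.mono sphere_subset_closedBall).circleIntegrable hr

theorem circleAverage_mul_conj_evalRepresenter {u : ℂ → ℂ} (hu : DiffContOnCl ℂ u (ball 0 1))
    (hμ : ∀ x, ‖μ x‖ < 1) (a : X → ℂ) :
    circleAverage (fun z ↦ u z * conj (evalRepresenter μ a z)) 0 1 = ∑ x, a x * u (μ x) := by
  have hexpand : (fun z ↦ u z * conj (evalRepresenter μ a z)) =
      fun z ↦ ∑ x, a x • (u z * conj (szegoKernel z (μ x))) := by
    ext z
    simp [evalRepresenter, mul_sum, mul_left_comm]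
  have hint : ∀ x, CircleIntegrable (fun z ↦ u z * conj (szegoKernel z (μ x))) 0 1 := fun x ↦
    circleIntegrable_mul_conj zero_le_one hu
      ((differentiableOn_szegoKernel (hμ x)).diffContOnCl_ball subset_rfl)
  rw [hexpand, Real.circleAverage_fun_sum fun x _ ↦ (hint x).const_fun_smul]
  refine sum_congr rfl fun x _ ↦ ?_
  rw [Real.circleAverage_fun_smul, circleAverage_mul_conj_szegoKernel hu (hμ x), smul_eq_mul]

/-- The squared `H²` norm of `evalRepresenter μ a`, equal to the Gram sum of the Szegő kernel at the
nodes `μ` with coefficients `a`. -/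
noncomputable def szegoEnergy (μ a : X → ℂ) : ℝ :=
  circleAverage (fun z ↦ ‖evalRepresenter μ a z‖ ^ 2) 0 1

lemma circleIntegrable_norm_sq_evalRepresenter (hμ : ∀ x, ‖μ x‖ < 1) (a : X → ℂ) :
    CircleIntegrable (fun z ↦ ‖evalRepresenter μ a z‖ ^ 2) 0 1 :=
  (((differentiableOn_evalRepresenter hμ a).continuousOn.mono
    sphere_subset_closedBall).norm.pow 2).circleIntegrable zero_le_one

lemma ofReal_szegoEnergy (hμ : ∀ x, ‖μ x‖ < 1) (a : X → ℂ) :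
    (szegoEnergy μ a : ℂ) = ∑ x, a x * evalRepresenter μ a (μ x) := by
  have hrepr := diffContOnCl_evalRepresenter hμ a
  rw [← circleAverage_mul_conj_evalRepresenter hrepr hμ a]
  simp only [Complex.mul_conj', ← Complex.ofReal_pow]
  exact (Complex.ofRealCLM.circleAverage_comp_comm
    (circleIntegrable_norm_sq_evalRepresenter hμ a)).symm

lemma ofReal_szegoEnergy_eq_sum_sum (hμ : ∀ x, ‖μ x‖ < 1) (a : X → ℂ) :
    (szegoEnergy μ a : ℂ) = ∑ x, ∑ y, a x * conj (a y) * szegoKernel (μ x) (μ y) := by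
  simp only [ofReal_szegoEnergy hμ, evalRepresenter, mul_sum, mul_assoc]

lemma continuous_szegoEnergy (hμ : ∀ x, ‖μ x‖ < 1) : Continuous (szegoEnergy μ) := by
  have hre : szegoEnergy μ =
      fun a ↦ (∑ x, ∑ y, a x * conj (a y) * szegoKernel (μ x) (μ y)).re := by
    ext a
    rw [← ofReal_szegoEnergy_eq_sum_sum hμ, Complex.ofReal_re]
  rw [hre]
  fun_prop

variable {ι : Type*} [Fintype ι]

lemma two_mul_re_sum_mul_mul_conj_le (s f : ι → ℂ) (k : ℂ) {C : ℝ} (hs : ∑ i, ‖s i‖ ^ 2 ≤ C) :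
    2 * (∑ i, s i * k * conj (f i)).re ≤ ‖k‖ ^ 2 + C * ∑ i, ‖f i‖ ^ 2 := by
  have hre : (∑ i, s i * k * conj (f i)).re ≤ ‖k‖ * ∑ i, ‖s i‖ * ‖f i‖ := by
    refine (Complex.re_le_norm _).trans ((norm_sum_le _ _).trans_eq ?_)
    simp [mul_sum, mul_assoc, mul_left_comm]
  have hcauchy : (∑ i, ‖s i‖ * ‖f i‖) ^ 2 ≤ C * ∑ i, ‖f i‖ ^ 2 :=
    (sum_mul_sq_le_sq_mul_sq _ _ _).trans (by gcongr)
  linarith [two_mul_le_add_sq ‖k‖ (∑ i, ‖s i‖ * ‖f i‖)]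

lemma ofReal_szegoEnergy_sum_mul (hμ : ∀ x, ‖μ x‖ < 1) {ψ : ι → ℂ → ℂ}
    (hψ : ∀ i, DiffContOnCl ℂ (ψ i) (ball 0 1)) (b : ι → X → ℂ) {c : X → ℂ}
    (hc : ∀ x, c x = ∑ i, ψ i (μ x) * b i x) :
    (szegoEnergy μ c : ℂ) = circleAverage (fun z ↦
      ∑ i, ψ i z * evalRepresenter μ c z * conj (evalRepresenter μ (b i) z)) 0 1 := by
  have hmul : ∀ i, DiffContOnCl ℂ (fun z ↦ ψ i z * evalRepresenter μ c z) (ball 0 1) := fun i ↦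
    (hψ i).smul (diffContOnCl_evalRepresenter hμ c)
  rw [Real.circleAverage_fun_sum fun i _ ↦
    circleIntegrable_mul_conj zero_le_one (hmul i) (diffContOnCl_evalRepresenter hμ (b i))]
  simp only [circleAverage_mul_conj_evalRepresenter (hmul _) hμ]
  rw [sum_comm, ofReal_szegoEnergy hμ]
  refine sum_congr rfl fun x _ ↦ ?_
  rw [hc, sum_mul]
  exact sum_congr rfl fun i _ ↦ by ring

/-- Multiplication by the column `ψ` is bounded by `√C` from `H²` to a sum of copies of `H²`, and
its adjoint carries the representers of the `b i` to that of `x ↦ ∑ i, ψ i (μ x) * b i x`. -/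
lemma szegoEnergy_le_of_diffContOnCl (hμ : ∀ x, ‖μ x‖ < 1) {ψ : ι → ℂ → ℂ}
    (hψ : ∀ i, DiffContOnCl ℂ (ψ i) (ball 0 1)) {C : ℝ}
    (hC : ∀ z, ‖z‖ = 1 → ∑ i, ‖ψ i z‖ ^ 2 ≤ C) (b : ι → X → ℂ) :
    szegoEnergy μ (fun x ↦ ∑ i, ψ i (μ x) * b i x) ≤ C * ∑ i, szegoEnergy μ (b i) := by
  set c := fun x ↦ ∑ i, ψ i (μ x) * b i x
  let pairing := fun z ↦ ∑ i, ψ i z * evalRepresenter μ c z * conj (evalRepresenter μ (b i) z)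
  have hpairing : CircleIntegrable pairing 0 1 := CircleIntegrable.fun_sum _ fun i _ ↦
    circleIntegrable_mul_conj zero_le_one ((hψ i).smul (diffContOnCl_evalRepresenter hμ c))
      (diffContOnCl_evalRepresenter hμ (b i))
  have hre : CircleIntegrable (fun z ↦ (pairing z).re) 0 1 :=
    ⟨hpairing.1.re, hpairing.2.re⟩
  have henergy : circleAverage (fun z ↦ (pairing z).re) 0 1 = szegoEnergy μ c := by
    rw [← Complex.ofReal_re (szegoEnergy μ c), ofReal_szegoEnergy_sum_mul hμ hψ b fun _ ↦ rfl]
    exact Complex.reCLM.circleAverage_comp_comm hpairing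
  have hc_int := circleIntegrable_norm_sq_evalRepresenter hμ c
  have hb_int : CircleIntegrable (fun z ↦ ∑ i, ‖evalRepresenter μ (b i) z‖ ^ 2) 0 1 :=
    CircleIntegrable.fun_sum _ fun i _ ↦ circleIntegrable_norm_sq_evalRepresenter hμ (b i)
  have hle : 2 * szegoEnergy μ c ≤ szegoEnergy μ c + C * ∑ i, szegoEnergy μ (b i) := calc
    2 * szegoEnergy μ c = circleAverage (fun z ↦ (2 : ℝ) • (pairing z).re) 0 1 := by
      rw [Real.circleAverage_fun_smul, henergy, smul_eq_mul]
    _ ≤ circleAverage (fun z ↦ ‖evalRepresenter μ c z‖ ^ 2 +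
          C • ∑ i, ‖evalRepresenter μ (b i) z‖ ^ 2) 0 1 :=
      Real.circleAverage_mono hre.const_fun_smul (hc_int.fun_add hb_int.const_fun_smul) fun z hz ↦
        two_mul_re_sum_mul_mul_conj_le _ _ _ (hC z (by simpa using hz))
    _ = szegoEnergy μ c + C * ∑ i, szegoEnergy μ (b i) := by
      rw [Real.circleAverage_fun_add hc_int hb_int.const_fun_smul, Real.circleAverage_fun_smul,
        Real.circleAverage_fun_sum fun i _ ↦ circleIntegrable_norm_sq_evalRepresenter hμ (b i)]
      rfl
  linarith

/-- The dilations `z ↦ ψ i (r * z)` with `r < 1` are continuous up to the circle, so the bounded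
functions `ψ i` need no boundary values. -/
theorem szegoEnergy_sum_mul_le (hμ : ∀ x, ‖μ x‖ < 1) {ψ : ι → ℂ → ℂ}
    (hψ : ∀ i, DifferentiableOn ℂ (ψ i) (ball 0 1)) {C : ℝ}
    (hC : ∀ z ∈ ball (0 : ℂ) 1, ∑ i, ‖ψ i z‖ ^ 2 ≤ C) (b : ι → X → ℂ) :
    szegoEnergy μ (fun x ↦ ∑ i, ψ i (μ x) * b i x) ≤ C * ∑ i, szegoEnergy μ (b i) := by
  have hdilate : ∀ r ∈ Set.Ioo (0 : ℝ) 1, ∀ z ∈ closedBall (0 : ℂ) 1, r * z ∈ ball (0 : ℂ) 1 := by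
    intro r hr z hz
    have hz1 := mem_closedBall_zero_iff.1 hz
    rw [mem_ball_zero_iff, norm_mul, Complex.norm_real, Real.norm_of_nonneg hr.1.le]
    nlinarith [hr.1, hr.2]
  have hdilated : ∀ r ∈ Set.Ioo (0 : ℝ) 1,
      szegoEnergy μ (fun x ↦ ∑ i, ψ i (r * μ x) * b i x) ≤ C * ∑ i, szegoEnergy μ (b i) := by
    intro r hr
    refine szegoEnergy_le_of_diffContOnCl hμ (ψ := fun i z ↦ ψ i (r * z)) (fun i ↦ ?_)
      (fun z hz ↦ hC _ (hdilate r hr z (by simp [hz]))) b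
    exact ((hψ i).comp (by fun_prop) (hdilate r hr)).diffContOnCl_ball subset_rfl
  have htendsto : Filter.Tendsto (fun r : ℝ ↦ szegoEnergy μ fun x ↦ ∑ i, ψ i (r * μ x) * b i x)
      (𝓝[<] 1) (𝓝 (szegoEnergy μ fun x ↦ ∑ i, ψ i (μ x) * b i x)) := by
    have hcont : ∀ i x, ContinuousAt (fun r : ℝ ↦ ψ i (r * μ x)) 1 := fun i x ↦ by
      have hψx : ContinuousAt (ψ i) ((1 : ℝ) * μ x) := by
        simpa using (hψ i).continuousOn.continuousAt
          (isOpen_ball.mem_nhds (mem_ball_zero_iff.2 (hμ x)))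
      exact hψx.comp (f := fun r : ℝ ↦ (r : ℂ) * μ x) (by fun_prop)
    have henergy : ContinuousAt
        (fun r : ℝ ↦ szegoEnergy μ fun x ↦ ∑ i, ψ i (r * μ x) * b i x) 1 :=
      (continuous_szegoEnergy hμ).continuousAt.comp <| continuousAt_pi.2 fun x ↦
        tendsto_finsetSum _ fun i _ ↦ (hcont i x).mul continuousAt_const
    simpa using henergy.tendsto.mono_left nhdsWithin_le_nhds
  exact le_of_tendsto htendsto
    (Filter.mem_of_superset (Ioo_mem_nhdsLT zero_lt_one) hdilated)

end HardySpace

namespace IsPSDKernelDisk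

variable {F : ℂ → ℂ → ℂ}

lemma conj_apply (hF : IsPSDKernelDisk F) {z w : ℂ} (hz : z ∈ ball (0 : ℂ) 1)
    (hw : w ∈ ball (0 : ℂ) 1) : conj (F z w) = F w z := by
  have hdiag : ∀ ζ ∈ ball (0 : ℂ) 1, (F ζ ζ).im = 0 := fun ζ hζ ↦ by
    simpa using (Complex.nonneg_iff.1 (hF 1 ![ζ] (by simpa using hζ) ![1])).2.symm
  have hpair : ∀ c : ℂ, (conj c * F z w + c * F w z + c * conj c * F w w).im = 0 := fun c ↦ by
    have h := (Complex.nonneg_iff.1 (hF 2 ![z, w] (Fin.forall_fin_two.2 ⟨hz, hw⟩)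
      ![1, c])).2
    simpa [Fin.sum_univ_two, hdiag z hz, add_assoc] using h.symm
  have him := hpair 1
  have hre := hpair Complex.I
  simp only [map_one, one_mul, Complex.add_im, Complex.conj_I, Complex.mul_im, Complex.mul_re,
    Complex.neg_re, Complex.neg_im, Complex.I_re, Complex.I_im, hdiag w hw] at him hre
  apply Complex.ext <;> simp <;> linarith

lemma sum_nonneg {X : Type*} [Fintype X] (hF : IsPSDKernelDisk F) {μ : X → ℂ}
    (hμ : ∀ x, μ x ∈ ball (0 : ℂ) 1) (a : X → ℂ) :
    0 ≤ ∑ x, ∑ y, a x * conj (a y) * F (μ x) (μ y) := by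
  let e := (Fintype.equivFin X).symm
  calc 0 ≤ ∑ i, ∑ j, a (e i) * conj (a (e j)) * F (μ (e i)) (μ (e j)) :=
        hF _ (μ ∘ e) (fun i ↦ hμ (e i)) (a ∘ e)
    _ = ∑ x, ∑ y, a x * conj (a y) * F (μ x) (μ y) :=
        Fintype.sum_equiv e _ _ fun i ↦
          e.sum_comp fun y ↦ a (e i) * conj (a y) * F (μ (e i)) (μ y)

lemma posSemidef (hF : IsPSDKernelDisk F) :
    Matrix.PosSemidef (.of fun x y : ball (0 : ℂ) 1 ↦ F y x) := by
  refine ⟨?_, fun c ↦ ?_⟩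
  · ext x y
    exact hF.conj_apply x.2 y.2
  · have h := hF.sum_nonneg (X := c.support) (fun x ↦ x.1.2) fun x ↦ c x
    rw [sum_comm] at h
    simp only [Finsupp.sum, ← sum_coe_sort c.support]
    convert h using 3
    simp only [Matrix.of_apply, RCLike.star_def]
    ring

end IsPSDKernelDisk

/-- The kernel `(∑ i, φ i z * conj (φ i w) - δ) / (1 - z * conj w)` on the disk, whose
positivity expresses that the row `φ` of multipliers satisfies `M_φ M_φ* ≥ δ` on `H²`. -/
noncomputable def coronaKernel {ι : Type*} [Fintype ι] (φ : ι → ℂ → ℂ) (δ : ℝ) (z w : ℂ) : ℂ :=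
  ((∑ i, φ i z * conj (φ i w)) - δ) / (1 - z * conj w)

section ToeplitzCorona

variable {ι : Type*} [Fintype ι] {φ ψ : ι → ℂ → ℂ} {δ : ℝ}

theorem exists_bezout_of_isPSDKernelDisk_coronaKernel (hδ : 0 < δ)
    (hker : IsPSDKernelDisk (coronaKernel φ δ)) :
    ∃ ψ : ι → ℂ → ℂ, (∀ i, DifferentiableOn ℂ (ψ i) (ball 0 1)) ∧
      (∀ z ∈ ball (0 : ℂ) 1, ∑ i, ψ i z * φ i z = 1) ∧
      ∀ z ∈ ball (0 : ℂ) 1, ∑ i, ‖ψ i z‖ ^ 2 ≤ 1 / δ := by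
  let s : ℂ := (√δ : ℝ)
  have hs : s ≠ 0 := Complex.ofReal_ne_zero.2 (Real.sqrt_ne_zero'.2 hδ)
  have hsnorm : ‖s‖ ^ 2 = δ := by simp [s, Real.sq_sqrt hδ.le]
  let v (x : ball (0 : ℂ) 1) : EuclideanSpace ℂ ι := WithLp.toLp 2 fun i ↦ φ i x
  have hpick : Matrix.PosSemidef (.of fun x y : ball (0 : ℂ) 1 ↦
      (⟪v x, v y⟫_ℂ - ⟪s, s⟫_ℂ) / (1 - y * conj (x : ℂ))) := by
    have hgram : ∀ x y, ⟪v x, v y⟫_ℂ = ∑ i, φ i y * conj (φ i x) := fun x y ↦ by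
      simp [v, PiLp.inner_apply]
    have hsinner : ⟪s, s⟫_ℂ = δ := by
      rw [inner_self_eq_norm_sq_to_K, ← RCLike.ofReal_pow, hsnorm]; rfl
    simp only [hgram, hsinner]
    exact hker.posSemidef
  obtain ⟨W, hWdiff, hWnorm, hW⟩ := exists_contractive_interpolant_of_posSemidef
    (z := ((↑) : ball (0 : ℂ) 1 → ℂ)) (fun x ↦ mem_ball_zero_iff.1 x.2) hpick
  let e := EuclideanSpace.basisFun ι ℂ
  refine ⟨fun i z ↦ s⁻¹ * W z (e i), fun i ↦ ?_, fun z hz ↦ ?_, fun z hz ↦ ?_⟩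
  · exact (hWdiff.clm_apply (differentiableOn_const (e i))).const_mul s⁻¹
  · have hv : ∑ i, φ i z • e i = v ⟨z, hz⟩ := e.sum_repr (v ⟨z, hz⟩)
    calc ∑ i, s⁻¹ * W z (e i) * φ i z = s⁻¹ * W z (∑ i, φ i z • e i) := by
          simp [mul_sum, mul_left_comm, mul_comm]
      _ = 1 := by rw [hv, hW ⟨z, hz⟩, inv_mul_cancel₀ hs]
  · calc ∑ i, ‖s⁻¹ * W z (e i)‖ ^ 2 = δ⁻¹ * ‖W z‖ ^ 2 := by
          rw [← sum_norm_sq_apply_orthonormalBasis e (W z), mul_sum]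
          refine sum_congr rfl fun i _ ↦ ?_
          rw [norm_mul, mul_pow, norm_inv, inv_pow, hsnorm]
      _ ≤ δ⁻¹ * 1 := by
          gcongr
          exact pow_le_one₀ (norm_nonneg _) (hWnorm z (mem_ball_zero_iff.1 hz))
      _ = 1 / δ := by rw [mul_one, one_div]

lemma sum_coronaKernel {X : Type*} [Fintype X] {μ : X → ℂ} (hμ : ∀ x, ‖μ x‖ < 1) (a : X → ℂ) :
    ∑ x, ∑ y, a x * conj (a y) * coronaKernel φ δ (μ x) (μ y) =
      ((∑ i, szegoEnergy μ (fun x ↦ φ i (μ x) * a x) - δ * szegoEnergy μ a : ℝ) : ℂ) := by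
  have hterm : ∀ x y, a x * conj (a y) * coronaKernel φ δ (μ x) (μ y) =
      (∑ i, φ i (μ x) * a x * conj (φ i (μ y) * a y) * szegoKernel (μ x) (μ y)) -
        δ * (a x * conj (a y) * szegoKernel (μ x) (μ y)) := fun x y ↦ by
    rw [coronaKernel, div_eq_mul_inv, ← szegoKernel, sub_mul, mul_sub, sum_mul, mul_sum]
    congr 1
    · exact sum_congr rfl fun i _ ↦ by rw [map_mul]; ring
    · ring
  push_cast
  simp only [ofReal_szegoEnergy_eq_sum_sum hμ, hterm, sum_sub_distrib, ← mul_sum]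
  congr 1
  rw [sum_comm (γ := ι)]
  exact sum_congr rfl fun x _ ↦ sum_comm

theorem isPSDKernelDisk_coronaKernel_of_bezout (hδ : 0 < δ)
    (hψ : ∀ i, DifferentiableOn ℂ (ψ i) (ball 0 1))
    (hbezout : ∀ z ∈ ball (0 : ℂ) 1, ∑ i, ψ i z * φ i z = 1)
    (hbound : ∀ z ∈ ball (0 : ℂ) 1, ∑ i, ‖ψ i z‖ ^ 2 ≤ 1 / δ) :
    IsPSDKernelDisk (coronaKernel φ δ) := by
  intro n μ hμ a
  have hμ' : ∀ i, ‖μ i‖ < 1 := fun i ↦ mem_ball_zero_iff.1 (hμ i)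
  have ha : (fun x ↦ ∑ i, ψ i (μ x) * (φ i (μ x) * a x)) = a := by
    ext x
    simp only [← mul_assoc, ← sum_mul, hbezout _ (hμ x), one_mul]
  have henergy := szegoEnergy_sum_mul_le hμ' hψ hbound fun i x ↦ φ i (μ x) * a x
  rw [ha, one_div, le_inv_mul_iff₀ hδ] at henergy
  rw [sum_coronaKernel hμ' a]
  exact Complex.zero_le_real.2 (sub_nonneg.2 henergy)

end ToeplitzCorona

theorem toeplitz_corona_disk_general {ι : Type*} [Fintype ι] (φ : ι → ℂ → ℂ) {δ : ℝ} (hδ : 0 < δ) :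
    IsPSDKernelDisk (coronaKernel φ δ) ↔
      ∃ ψ : ι → ℂ → ℂ, (∀ i, DifferentiableOn ℂ (ψ i) (ball 0 1)) ∧
        (∀ z ∈ ball (0 : ℂ) 1, ∑ i, ψ i z * φ i z = 1) ∧
        ∀ z ∈ ball (0 : ℂ) 1, ∑ i, ‖ψ i z‖ ^ 2 ≤ 1 / δ :=
  ⟨exists_bezout_of_isPSDKernelDisk_coronaKernel hδ, fun ⟨_, hψ, hbezout, hbound⟩ ↦
    isPSDKernelDisk_coronaKernel_of_bezout hδ hψ hbezout hbound⟩

/-- **Toeplitz-corona theorem on the disk.** For bounded analytic `φ₁, …, φ_N` on `𝔻` and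
`δ > 0`, the kernel `(ζ,λ) ↦ [∑ᵢ φᵢ(ζ)φᵢ(λ)~ - δ]/(1 - ζλ̄)` is positive semi-definite if
and only if there are analytic `ψ₁, …, ψ_N` on `𝔻` with `∑ᵢ ψᵢφᵢ = 1` and
`sup_𝔻 ∑ᵢ |ψᵢ|² ≤ 1/δ`. -/
theorem toeplitz_corona_disk {N : ℕ} (φ : Fin N → ℂ → ℂ)
    (hφ : ∀ i, DifferentiableOn ℂ (φ i) (ball (0 : ℂ) 1))
    (hφb : ∀ i, ∃ C : ℝ, ∀ z ∈ ball (0 : ℂ) 1, ‖φ i z‖ ≤ C)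
    (δ : ℝ) (hδ : 0 < δ) :
    IsPSDKernelDisk (fun zeta lam =>
      ((∑ i, φ i zeta * starRingEnd ℂ (φ i lam)) - (δ : ℂ)) /
        (1 - zeta * starRingEnd ℂ lam)) ↔
    ∃ ψ : Fin N → ℂ → ℂ,
      (∀ i, DifferentiableOn ℂ (ψ i) (ball (0 : ℂ) 1)) ∧
      (∀ z ∈ ball (0 : ℂ) 1, ∑ i, ψ i z * φ i z = 1) ∧
      (∀ z ∈ ball (0 : ℂ) 1, ∑ i, ‖ψ i z‖ ^ 2 ≤ 1 / δ) :=
  toeplitz_corona_disk_general φ hδ
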